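/- Let n ≥ 1 be an integer, let i ∈ {1,…,n}, and let S ⊆ {1,…,n}. Let k = k_S(i) be the largest integer with 0 ≤ k ≤ i and k ∉ S (it exists since 0 ∉ S). Then the following identity of real numbers holds: c_i · d_S = d_{{k} ∪ (S ∖ {k+1,…,i})} + 2·∑_{j=k+1}^{i} d_{S ∖ {j,…,i}}. (Note that when k = 0 the first summand vanishes automatically, since c_0 = 0.) -/

import Mathlib

open Real

/-- `c j = 2·cos(π/2^(j+1))` (so `c 0 = 0`). -/
noncomputable def c (j : ℕ) : ℝ := 2 * Real.cos (π / 2 ^ (j + 1))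

/-- `d S = ∏_{j ∈ S} c j` (so `d ∅ = 1`). -/
noncomputable def d (S : Finset ℕ) : ℝ := ∏ j ∈ S, c j

/-! The only input about cosines is the half-angle recursion `c (j + 1) ^ 2 = 2 + c j`. It makes
`c i * (c (k + 1) * ⋯ * c i)` telescope: the last factor is squared, which splits off
`2 * (c (k + 1) * ⋯ * c (i - 1))` and leaves the same expression with `i - 1` for `i`, until only
`c k` remains. Since `S` contains `{k + 1, …, i}`, the identity is this one multiplied by the
product over the rest of `S`. -/

theorem c_succ_sq (j : ℕ) : c (j + 1) ^ 2 = 2 + c j := by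
  have two_mul_half_angle : 2 * (π / 2 ^ (j + 1 + 1)) = π / 2 ^ (j + 1) := by
    rw [pow_succ 2 (j + 1)]
    field_simp
  rw [c, c, mul_pow, Real.cos_sq, two_mul_half_angle]
  ring

theorem mul_prod_Icc_of_succ_sq {R : Type*} [CommSemiring R] {x : ℕ → R} {a : R}
    (hx : ∀ j, x (j + 1) ^ 2 = a + x j) {k i : ℕ} (hki : k ≤ i) :
    x i * ∏ m ∈ Finset.Icc (k + 1) i, x m =
      x k + a * ∑ j ∈ Finset.Icc (k + 1) i, ∏ m ∈ Finset.Ico (k + 1) j, x m := by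
  induction i, hki using Nat.le_induction with
  | base => simp
  | succ i hki ih =>
    have hki' : k + 1 ≤ i + 1 := Nat.succ_le_succ hki
    rw [Finset.prod_Icc_succ_top hki', Finset.sum_Icc_succ_top hki',
      Finset.Ico_add_one_right_eq_Icc]
    set P := ∏ m ∈ Finset.Icc (k + 1) i, x m
    calc x (i + 1) * (P * x (i + 1)) = x (i + 1) ^ 2 * P := by ring
      _ = x i * P + a * P := by rw [hx, add_mul, add_comm]
      _ = _ := by rw [ih, mul_add, add_assoc]

theorem prod_sdiff_Icc_mul_prod_Ico {α M : Type*} [LinearOrder α] [LocallyFiniteOrder α]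
    [CommMonoid M] (f : α → M) {S : Finset α} {l j i : α} (hlj : l ≤ j) (hji : j ≤ i)
    (hS : Finset.Icc l i ⊆ S) :
    (∏ m ∈ S \ Finset.Icc l i, f m) * ∏ m ∈ Finset.Ico l j, f m =
      ∏ m ∈ S \ Finset.Icc j i, f m := by
  have Ico_subset : Finset.Ico l j ⊆ S \ Finset.Icc j i := fun m hm => by grind
  have sdiff_sdiff_Ico : (S \ Finset.Icc j i) \ Finset.Ico l j = S \ Finset.Icc l i := by
    ext m
    grind
  rw [← sdiff_sdiff_Ico, Finset.prod_sdiff Ico_subset]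

theorem stmt_3_general {R : Type*} [CommSemiring R] {x : ℕ → R} {a : R}
    (hx : ∀ j, x (j + 1) ^ 2 = a + x j) {S : Finset ℕ} {k i : ℕ} (hki : k ≤ i) (hkS : k ∉ S)
    (hS : Finset.Icc (k + 1) i ⊆ S) :
    x i * ∏ m ∈ S, x m =
      ∏ m ∈ insert k (S \ Finset.Icc (k + 1) i), x m +
        a * ∑ j ∈ Finset.Icc (k + 1) i, ∏ m ∈ S \ Finset.Icc j i, x m := by
  set rest := ∏ m ∈ S \ Finset.Icc (k + 1) i, x m
  have prod_insert_eq : ∏ m ∈ insert k (S \ Finset.Icc (k + 1) i), x m = x k * rest :=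
    Finset.prod_insert fun hk => hkS (Finset.mem_sdiff.1 hk).1
  have sum_eq : ∑ j ∈ Finset.Icc (k + 1) i, ∏ m ∈ S \ Finset.Icc j i, x m =
      rest * ∑ j ∈ Finset.Icc (k + 1) i, ∏ m ∈ Finset.Ico (k + 1) j, x m := by
    rw [Finset.mul_sum]
    refine Finset.sum_congr rfl fun j hj => ?_
    obtain ⟨hkj, hji⟩ := Finset.mem_Icc.1 hj
    exact (prod_sdiff_Icc_mul_prod_Ico x hkj hji hS).symm
  calc x i * ∏ m ∈ S, x m = rest * (x i * ∏ m ∈ Finset.Icc (k + 1) i, x m) := by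
        rw [← Finset.prod_sdiff hS, mul_left_comm]
    _ = rest * (x k +
          a * ∑ j ∈ Finset.Icc (k + 1) i, ∏ m ∈ Finset.Ico (k + 1) j, x m) := by
        rw [mul_prod_Icc_of_succ_sq hx hki]
    _ = _ := by
        rw [prod_insert_eq, sum_eq]
        ring

/-- the fusion-rule identity
`c_i · d_S = d_{{k} ∪ (S ∖ {k+1,…,i})} + 2·∑_{j=k+1}^{i} d_{S ∖ {j,…,i}}`,
where `k = k_S(i)` is the largest integer `0 ≤ k ≤ i` with `k ∉ S`. -/
theorem stmt_3 (n : ℕ) (hn : 1 ≤ n) (i : ℕ) (hi : i ∈ Finset.Icc 1 n)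
    (S : Finset ℕ) (hS : S ⊆ Finset.Icc 1 n) (k : ℕ) (hki : k ≤ i) (hkS : k ∉ S)
    (hkmax : ∀ m, k < m → m ≤ i → m ∈ S) :
    c i * d S =
      d (insert k (S \ Finset.Icc (k + 1) i)) +
        2 * ∑ j ∈ Finset.Icc (k + 1) i, d (S \ Finset.Icc j i) :=
  stmt_3_general c_succ_sq hki hkS fun m hm =>
    hkmax m (Finset.mem_Icc.1 hm).1 (Finset.mem_Icc.1 hm).2
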